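/- Let a > 0 and b > 0 be real numbers, and define h(x) := ((cosh(a(2−x)) − cos(2b)cosh(ax))cos(bx) − sin(2b)sin(bx)cosh(ax))/(cosh(2a) − cos(2b)) and g(x) := (sin(2b)cos(bx)sinh(ax) − (sinh(a(2−x)) + cos(2b)sinh(ax))sin(bx))/(cosh(2a) − cos(2b)). Then ∫₀¹ h(x)·g(x) dx = sinh(2a)sin(2b)/(2(cosh(2a) − cos(2b))²) − (a·sin(2b) + b·sinh(2a))/(4(a²+b²)(cosh(2a) − cos(2b))). -/

import Mathlib

/-!
With `z = a + i b`, the profiles are the real and imaginary parts of the solution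
`F x = sinh (z (1 - x)) / sinh z` of `F'' = z² F`, `F 0 = 1`, `F 1 = 0`, because
`2 sinh w · conj (sinh z) = cosh (w + conj z) - cosh (w - conj z)`, which for `w = z` is
`2 |sinh z|² = cosh (2 a) - cos (2 b)`. Hence `h g = Im (F²) / 2`, and
`∫₀¹ F² = (cosh z / (z sinh z) - 1 / sinh² z) / 2` is elementary.
-/

open Real intervalIntegral MeasureTheory

noncomputable section

/-- The profile `h`. -/
def hProf (a b : ℝ) (x : ℝ) : ℝ :=
  ((Real.cosh (a * (2 - x)) - Real.cos (2 * b) * Real.cosh (a * x)) * Real.cos (b * x) -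
    Real.sin (2 * b) * Real.sin (b * x) * Real.cosh (a * x)) /
  (Real.cosh (2 * a) - Real.cos (2 * b))

/-- The profile `g`. -/
def gProf (a b : ℝ) (x : ℝ) : ℝ :=
  (Real.sin (2 * b) * Real.cos (b * x) * Real.sinh (a * x) -
    (Real.sinh (a * (2 - x)) + Real.cos (2 * b) * Real.sinh (a * x)) * Real.sin (b * x)) /
  (Real.cosh (2 * a) - Real.cos (2 * b))

open scoped ComplexConjugate

lemma re_cosh (z : ℂ) : (Complex.cosh z).re = cosh z.re * cos z.im := by
  conv_lhs => rw [← Complex.re_add_im z, Complex.cosh_add, Complex.cosh_mul_I, Complex.sinh_mul_I]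
  simp [← Complex.ofReal_cosh, ← Complex.ofReal_sinh, ← Complex.ofReal_cos, ← Complex.ofReal_sin]

lemma im_cosh (z : ℂ) : (Complex.cosh z).im = sinh z.re * sin z.im := by
  conv_lhs => rw [← Complex.re_add_im z, Complex.cosh_add, Complex.cosh_mul_I, Complex.sinh_mul_I]
  simp [← Complex.ofReal_cosh, ← Complex.ofReal_sinh, ← Complex.ofReal_cos, ← Complex.ofReal_sin]

lemma re_sinh (z : ℂ) : (Complex.sinh z).re = sinh z.re * cos z.im := by
  conv_lhs => rw [← Complex.re_add_im z, Complex.sinh_add, Complex.cosh_mul_I, Complex.sinh_mul_I]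
  simp [← Complex.ofReal_cosh, ← Complex.ofReal_sinh, ← Complex.ofReal_cos, ← Complex.ofReal_sin]

lemma im_sinh (z : ℂ) : (Complex.sinh z).im = cosh z.re * sin z.im := by
  conv_lhs => rw [← Complex.re_add_im z, Complex.sinh_add, Complex.cosh_mul_I, Complex.sinh_mul_I]
  simp [← Complex.ofReal_cosh, ← Complex.ofReal_sinh, ← Complex.ofReal_cos, ← Complex.ofReal_sin]

lemma two_mul_sinh_mul_sinh (z w : ℂ) :
    2 * (Complex.sinh z * Complex.sinh w) = Complex.cosh (z + w) - Complex.cosh (z - w) := by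
  rw [Complex.cosh_add, Complex.cosh_sub]
  ring

lemma two_mul_cosh_mul_sinh (z w : ℂ) :
    2 * (Complex.cosh z * Complex.sinh w) = Complex.sinh (z + w) - Complex.sinh (z - w) := by
  rw [Complex.sinh_add, Complex.sinh_sub]
  ring

lemma two_mul_normSq_sinh (z : ℂ) :
    2 * Complex.normSq (Complex.sinh z) = cosh (2 * z.re) - cos (2 * z.im) := by
  have h := two_mul_sinh_mul_sinh z (conj z)
  rw [Complex.sinh_conj, Complex.mul_conj, Complex.add_conj, Complex.sub_conj,
    Complex.cosh_mul_I] at h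
  exact_mod_cast h

lemma div_sinh (w z : ℂ) :
    w / Complex.sinh z =
      2 * (w * Complex.sinh (conj z)) / (cosh (2 * z.re) - cos (2 * z.im) : ℝ) := by
  rw [← two_mul_normSq_sinh, Complex.sinh_conj, div_eq_mul_inv, Complex.inv_def]
  push_cast
  rw [mul_div_mul_left _ _ two_ne_zero, div_eq_mul_inv, mul_assoc]

lemma cosh_div_sinh (z : ℂ) :
    Complex.cosh z / Complex.sinh z =
      (sinh (2 * z.re) - sin (2 * z.im) * Complex.I) /
        (cosh (2 * z.re) - cos (2 * z.im) : ℝ) := by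
  rw [div_sinh, two_mul_cosh_mul_sinh, Complex.add_conj, Complex.sub_conj,
    Complex.sinh_mul_I, Complex.ofReal_sinh, Complex.ofReal_sin]

lemma im_cosh_div_sinh_div_self (z : ℂ) :
    (Complex.cosh z / Complex.sinh z / z).im =
      -((z.re * sin (2 * z.im) + z.im * sinh (2 * z.re)) /
        ((z.re ^ 2 + z.im ^ 2) * (cosh (2 * z.re) - cos (2 * z.im)))) := by
  rw [cosh_div_sinh, div_right_comm, Complex.div_ofReal_im, Complex.div_im,
    Complex.normSq_apply]
  simp only [Complex.sub_re, Complex.sub_im, Complex.ofReal_re, Complex.ofReal_im,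
    Complex.re_ofReal_mul, Complex.im_ofReal_mul, Complex.I_re, Complex.I_im, div_mul_eq_div_div]
  ring

lemma im_inv_sinh_sq (z : ℂ) :
    ((Complex.sinh z ^ 2)⁻¹).im =
      -(2 * sinh (2 * z.re) * sin (2 * z.im) / (cosh (2 * z.re) - cos (2 * z.im)) ^ 2) := by
  rw [Complex.inv_im, map_pow, ← two_mul_normSq_sinh, sinh_two_mul, sin_two_mul, sq, Complex.mul_im,
    re_sinh, im_sinh]
  ring

lemma integral_sinh_mul_sq {z : ℂ} (hz : z ≠ 0) (s t : ℝ) :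
    ∫ x in s..t, Complex.sinh (z * x) ^ 2 =
      (Complex.cosh (z * t) * Complex.sinh (z * t) / z - t) / 2 -
        (Complex.cosh (z * s) * Complex.sinh (z * s) / z - s) / 2 := by
  refine integral_eq_sub_of_hasDerivAt
    (f := fun x : ℝ => (Complex.cosh (z * x) * Complex.sinh (z * x) / z - x) / 2) (fun x _ => ?_)
    (Continuous.intervalIntegrable (by fun_prop) _ _)
  have h_mul : HasDerivAt (fun w : ℂ => z * w) z x := hasDerivAt_const_mul z
  have h_deriv := (((h_mul.ccosh.mul h_mul.csinh).div_const z).sub (hasDerivAt_id' _)).div_const 2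
  refine h_deriv.comp_ofReal.congr_deriv ?_
  field_simp
  rw [Complex.cosh_sq]
  ring

/-- For `sinh z ≠ 0`, the solution of `F'' = z ^ 2 * F` with `F 0 = 1` and `F 1 = 0`, whose real and
imaginary parts are the profiles `h` and `g` for `z = a + i b`. Where `sinh z = 0`, division by zero
gives it, like `h` and `g`, the junk value `0`. -/
def sinhProfile (z : ℂ) (x : ℝ) : ℂ :=
  Complex.sinh (z * (1 - x)) / Complex.sinh z

namespace sinhProfile

lemma eq_cosh_sub_cosh_div (z : ℂ) (x : ℝ) :
    sinhProfile z x =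
      (Complex.cosh ⟨z.re * (2 - x), -(z.im * x)⟩ - Complex.cosh ⟨-(z.re * x), z.im * (2 - x)⟩) /
        (cosh (2 * z.re) - cos (2 * z.im) : ℝ) := by
  have h_add : z * (1 - x) + conj z = ⟨z.re * (2 - x), -(z.im * x)⟩ := by
    apply Complex.ext <;>
      simp only [Complex.add_re, Complex.add_im, Complex.mul_re, Complex.mul_im, Complex.conj_re,
        Complex.conj_im, Complex.sub_re, Complex.sub_im, Complex.one_re, Complex.one_im,
        Complex.ofReal_re, Complex.ofReal_im] <;>
      ring
  have h_sub : z * (1 - x) - conj z = ⟨-(z.re * x), z.im * (2 - x)⟩ := by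
    apply Complex.ext <;>
      simp only [Complex.sub_re, Complex.sub_im, Complex.mul_re, Complex.mul_im, Complex.conj_re,
        Complex.conj_im, Complex.one_re, Complex.one_im, Complex.ofReal_re, Complex.ofReal_im] <;>
      ring
  rw [sinhProfile, div_sinh, two_mul_sinh_mul_sinh, h_add, h_sub]

lemma re_eq_hProf (z : ℂ) (x : ℝ) : (sinhProfile z x).re = hProf z.re z.im x := by
  have h_cos : cos (z.im * (2 - x)) =
      cos (2 * z.im) * cos (z.im * x) + sin (2 * z.im) * sin (z.im * x) := by
    rw [← cos_sub, mul_sub, mul_comm z.im 2]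
  rw [eq_cosh_sub_cosh_div, hProf, Complex.div_ofReal_re, Complex.sub_re, re_cosh,
    re_cosh, h_cos, cos_neg, cosh_neg]
  ring

lemma im_eq_gProf (z : ℂ) (x : ℝ) : (sinhProfile z x).im = gProf z.re z.im x := by
  have h_sin : sin (z.im * (2 - x)) =
      sin (2 * z.im) * cos (z.im * x) - cos (2 * z.im) * sin (z.im * x) := by
    rw [← sin_sub, mul_sub, mul_comm z.im 2]
  rw [eq_cosh_sub_cosh_div, gProf, Complex.div_ofReal_im, Complex.sub_im, im_cosh,
    im_cosh, h_sin, sin_neg, sinh_neg]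
  ring

lemma hProf_mul_gProf_eq_im_sq (z : ℂ) (x : ℝ) :
    hProf z.re z.im x * gProf z.re z.im x = (sinhProfile z x ^ 2).im / 2 := by
  rw [← re_eq_hProf, ← im_eq_gProf, sq, Complex.mul_im]
  ring

lemma continuous (z : ℂ) : Continuous (sinhProfile z) := by
  unfold sinhProfile
  fun_prop

lemma integral_sq {z : ℂ} (hz : Complex.sinh z ≠ 0) :
    ∫ x in (0 : ℝ)..1, sinhProfile z x ^ 2 =
      (Complex.cosh z / Complex.sinh z / z - (Complex.sinh z ^ 2)⁻¹) / 2 := by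
  have hz₀ : z ≠ 0 := by
    rintro rfl
    exact hz Complex.sinh_zero
  calc ∫ x in (0 : ℝ)..1, sinhProfile z x ^ 2
      = (∫ x in (0 : ℝ)..1, Complex.sinh (z * (1 - x : ℝ)) ^ 2) / Complex.sinh z ^ 2 := by
        simp only [sinhProfile, div_pow, intervalIntegral.integral_div, Complex.ofReal_sub,
          Complex.ofReal_one]
    _ = (∫ x in (0 : ℝ)..1, Complex.sinh (z * x) ^ 2) / Complex.sinh z ^ 2 := by
        rw [integral_comp_sub_left (fun x : ℝ => Complex.sinh (z * x) ^ 2), sub_self, sub_zero]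
    _ = (Complex.cosh z * Complex.sinh z / z - 1) / 2 / Complex.sinh z ^ 2 := by
        simp [integral_sinh_mul_sq hz₀]
    _ = (Complex.cosh z / Complex.sinh z / z - (Complex.sinh z ^ 2)⁻¹) / 2 := by
        field_simp

end sinhProfile

theorem profile_product_integral_general (a b : ℝ) (hD : cosh (2 * a) ≠ cos (2 * b)) :
    ∫ x in (0 : ℝ)..1, hProf a b x * gProf a b x =
      sinh (2 * a) * sin (2 * b) / (2 * (cosh (2 * a) - cos (2 * b)) ^ 2) -
      (a * sin (2 * b) + b * sinh (2 * a)) /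
        (4 * (a ^ 2 + b ^ 2) * (cosh (2 * a) - cos (2 * b))) := by
  obtain ⟨z, rfl, rfl⟩ : ∃ z : ℂ, z.re = a ∧ z.im = b := ⟨⟨a, b⟩, rfl, rfl⟩
  have hz : Complex.sinh z ≠ 0 := by
    intro h
    rw [← sub_ne_zero, ← two_mul_normSq_sinh, h, map_zero, mul_zero] at hD
    exact hD rfl
  calc ∫ x in (0 : ℝ)..1, hProf z.re z.im x * gProf z.re z.im x
      = (∫ x in (0 : ℝ)..1, (sinhProfile z x ^ 2).im) / 2 := by
        rw [← intervalIntegral.integral_div]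
        exact integral_congr fun x _ => sinhProfile.hProf_mul_gProf_eq_im_sq z x
    _ = (∫ x in (0 : ℝ)..1, sinhProfile z x ^ 2).im / 2 := by
        congr 1
        exact intervalIntegral_im (((sinhProfile.continuous z).pow 2).intervalIntegrable 0 1)
    _ = ((Complex.cosh z / Complex.sinh z / z).im - ((Complex.sinh z ^ 2)⁻¹).im) / 4 := by
        rw [sinhProfile.integral_sq hz, Complex.div_ofNat_im, Complex.sub_im]
        ring
    _ = _ := by
        rw [im_cosh_div_sinh_div_self, im_inv_sinh_sq]
        simp only [div_mul_eq_div_div]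
        ring

/-- `∫₀¹ h·g = sinh(2a)sin(2b)/(2(cosh(2a) − cos(2b))²)
 − (a sin(2b) + b sinh(2a))/(4(a²+b²)(cosh(2a) − cos(2b)))`. -/
theorem profile_product_integral (a b : ℝ) (ha : 0 < a) (hb : 0 < b) :
    (∫ x in (0:ℝ)..1, (hProf a b x) * (gProf a b x)) =
      Real.sinh (2 * a) * Real.sin (2 * b) /
        (2 * (Real.cosh (2 * a) - Real.cos (2 * b)) ^ 2) -
      (a * Real.sin (2 * b) + b * Real.sinh (2 * a)) /
        (4 * (a ^ 2 + b ^ 2) * (Real.cosh (2 * a) - Real.cos (2 * b))) := by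
  exact profile_product_integral_general a b
    ((cos_le_one _).trans_lt (one_lt_cosh.2 (by positivity))).ne'
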